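/- Let $X_n \sim \mathrm{Bin}(n,p)$ with $n$ a positive integer and $p \in (0,1)$. Then for every positive integer $k$ with $np < k \le n$, one has $\mathbb{P}[X_n \ge k] \le \frac{k(1-p)}{k - np} \cdot \mathbb{P}[X_n = k]$. -/

import Mathlib

/-- The binomial probability mass function: `P[Bin(n,p) = i] = C(n,i) p^i (1-p)^(n-i)`. -/
noncomputable def binPMF (n : ℕ) (p : ℝ) (i : ℕ) : ℝ :=
  (n.choose i : ℝ) * p ^ i * (1 - p) ^ (n - i)

/-- The binomial tail probability `P[Bin(n,p) ≥ k]`. -/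
noncomputable def binTail (n : ℕ) (p : ℝ) (k : ℕ) : ℝ :=
  ∑ i ∈ Finset.Icc k n, binPMF n p i

/-- The tail conditional expectation `E[Bin(n,p) | Bin(n,p) ≥ k]`,
i.e. `E[X · 1_{X ≥ k}] / P[X ≥ k]`. -/
noncomputable def binTCE (n : ℕ) (p : ℝ) (k : ℕ) : ℝ :=
  (∑ i ∈ Finset.Icc k n, (i : ℝ) * binPMF n p i) / binTail n p k

/-!
The pointwise identity `(i - n p) P[X = i] = i (1 - p) P[X = i] - (i + 1) (1 - p) P[X = i + 1]`
telescopes to `E[(X - n p) 1_{X ≥ k}] = k (1 - p) P[X = k]`. Since `X - n p ≥ k - n p` on the event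
`X ≥ k`, the left-hand side is at least `(k - n p) P[X ≥ k]`.
-/

theorem cast_choose_succ_mul_succ {R : Type*} [Ring R] (n i : ℕ) :
    (n.choose (i + 1) : R) * (i + 1) = n.choose i * (n - i) := by
  rcases le_or_gt i n with hin | hni
  · rw [← Nat.cast_sub hin]
    exact_mod_cast congrArg (Nat.cast (R := R)) (Nat.choose_succ_right_eq n i)
  · simp [Nat.choose_eq_zero_of_lt hni, Nat.choose_eq_zero_of_lt (hni.trans i.lt_succ_self)]

theorem binPMF_nonneg {p : ℝ} (hp : 0 ≤ p) (hp1 : p ≤ 1) (n i : ℕ) : 0 ≤ binPMF n p i := by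
  have : 0 ≤ 1 - p := sub_nonneg.mpr hp1
  unfold binPMF
  positivity

theorem binPMF_eq_zero_of_lt {n i : ℕ} (hni : n < i) (p : ℝ) : binPMF n p i = 0 := by
  simp [binPMF, Nat.choose_eq_zero_of_lt hni]

theorem succ_mul_binPMF_succ (n i : ℕ) (p : ℝ) :
    ((i : ℝ) + 1) * (1 - p) * binPMF n p (i + 1) = ((n : ℝ) - i) * p * binPMF n p i := by
  rcases lt_or_ge i n with hin | hni
  · have hexp : n - i = n - (i + 1) + 1 := by omega
    rw [binPMF, binPMF, hexp, pow_succ, pow_succ]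
    linear_combination
      p ^ i * p * (1 - p) ^ (n - (i + 1)) * (1 - p) * cast_choose_succ_mul_succ (R := ℝ) n i
  · rw [binPMF_eq_zero_of_lt (Nat.lt_succ_of_le hni)]
    rcases hni.eq_or_lt with rfl | hni
    · simp
    · simp [binPMF_eq_zero_of_lt hni]

theorem sum_Icc_sub_mean_mul_binPMF (n k : ℕ) (p : ℝ) :
    ∑ i ∈ Finset.Icc k n, ((i : ℝ) - n * p) * binPMF n p i = k * (1 - p) * binPMF n p k := by
  rcases lt_or_ge n k with hnk | hkn
  · simp [Finset.Icc_eq_empty_of_lt hnk, binPMF_eq_zero_of_lt hnk]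
  let f : ℕ → ℝ := fun i ↦ -(i * (1 - p) * binPMF n p i)
  have hdiff (i : ℕ) : ((i : ℝ) - n * p) * binPMF n p i = f (i + 1) - f i := by
    simp only [f, Nat.cast_succ]
    linear_combination succ_mul_binPMF_succ n i p
  calc ∑ i ∈ Finset.Icc k n, ((i : ℝ) - n * p) * binPMF n p i
      = ∑ i ∈ Finset.Icc k n, (f (i + 1) - f i) := Finset.sum_congr rfl fun i _ ↦ hdiff i
    _ = f (n + 1) - f k := Finset.sum_Icc_sub hkn f
    _ = k * (1 - p) * binPMF n p k := by simp [f, binPMF_eq_zero_of_lt n.lt_succ_self]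

theorem sub_mul_binTail_le_sum {p : ℝ} (hp : 0 ≤ p) (hp1 : p ≤ 1) (n k : ℕ) (c : ℝ) :
    (k - c) * binTail n p k ≤ ∑ i ∈ Finset.Icc k n, ((i : ℝ) - c) * binPMF n p i := by
  rw [binTail, Finset.mul_sum]
  gcongr with i hi
  · exact binPMF_nonneg hp hp1 n i
  · exact (Finset.mem_Icc.mp hi).1

theorem binomial_tail_le_point_mass
    (n k : ℕ) (p : ℝ) (hn : 0 < n) (hp : 0 < p) (hp1 : p < 1)
    (hk : 0 < k) (hlow : (n : ℝ) * p < k) (hkn : k ≤ n) :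
    binTail n p k ≤ (k : ℝ) * (1 - p) / ((k : ℝ) - n * p) * binPMF n p k := by
  have hpos : 0 < (k : ℝ) - n * p := sub_pos.mpr hlow
  rw [div_mul_eq_mul_div, le_div_iff₀' hpos]
  calc ((k : ℝ) - n * p) * binTail n p k
      ≤ ∑ i ∈ Finset.Icc k n, ((i : ℝ) - n * p) * binPMF n p i :=
        sub_mul_binTail_le_sum hp.le hp1.le n k (n * p)
    _ = k * (1 - p) * binPMF n p k := sum_Icc_sub_mean_mul_binPMF n k p
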